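/- arXiv:1904.09456 — 4 statements merged into one kernel-verified Lean document; each statement's English description precedes it below -/
import Mathlib

section
/- For every random vector Z : Ω → ℝ^d, the certainty equivalent C(Z) = C_up(Z) ∩ C_low(Z) has empty interior in ℝ^d. -/
open Pointwise

/-!
Points of `C(Z)` lie on a level set of each `u i`. On the interior of a level set the function is
locally constant, so every interior point would be a local maximum; but a function that strictly
increases along some line through each point has no local maximum (in economic terms, the
preferences are locally nonsatiated).
-/

section

open Filter Topology

variable {β : Type*}

theorem interior_preimage_singleton_eq_empty {X : Type*} [TopologicalSpace X] [Preorder β]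
    {f : X → β} (hf : ∀ x, ¬ IsLocalMax f x) (a : β) : interior (f ⁻¹' {a}) = ∅ := by
  refine Set.eq_empty_of_forall_notMem fun x hx => hf x ?_
  have hconst : f =ᶠ[𝓝 x] fun _ => a := mem_interior_iff_mem_nhds.mp hx
  exact hconst.isLocalMax_iff.mpr isLocalMax_const

theorem not_isLocalMax_of_strictMono {α : Type*} [LinearOrder α] [DenselyOrdered α] [NoMaxOrder α]
    [TopologicalSpace α] [OrderTopology α] [Preorder β] {f : α → β} (hf : StrictMono f) (x : α) :
    ¬ IsLocalMax f x := by
  intro hmax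
  have hright : ∀ᶠ y in 𝓝[>] x, f y ≤ f x := hmax.filter_mono nhdsWithin_le_nhds
  obtain ⟨y, hy, hxy⟩ := (hright.and self_mem_nhdsWithin).exists
  exact (hf hxy).not_ge hy

theorem not_isLocalMax_of_strictMono_add_smul {V : Type*} [AddCommGroup V] [Module ℝ V]
    [TopologicalSpace V] [ContinuousAdd V] [ContinuousSMul ℝ V] [Preorder β] {f : V → β} {x v : V}
    (hf : StrictMono fun t : ℝ => f (x + t • v)) : ¬ IsLocalMax f x := by
  intro hmax
  have hline : Continuous fun t : ℝ => x + t • v := by fun_prop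
  have hmax₀ : IsLocalMax f (x + (0 : ℝ) • v) := by simpa only [zero_smul, add_zero] using hmax
  exact not_isLocalMax_of_strictMono hf 0
    (hmax₀.comp_continuous (g := fun t : ℝ => x + t • v) hline.continuousAt)

theorem not_isLocalMax_of_forall_lt_imp_lt {ι : Type*} [Preorder β] {f : (ι → ℝ) → β}
    (hf : ∀ x y : ι → ℝ, (∀ k, x k < y k) → f x < f y) (x : ι → ℝ) : ¬ IsLocalMax f x := by
  refine not_isLocalMax_of_strictMono_add_smul (v := 1) fun a b hab => hf _ _ fun k => ?_
  simpa only [Pi.add_apply, Pi.smul_apply, Pi.one_apply, smul_eq_mul, mul_one, add_lt_add_iff_left]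

theorem stmt1_general {X ι κ : Type*} [TopologicalSpace X] [PartialOrder β] [Nonempty κ]
    (e : ι → κ → β) (u : ι → X → β) {i : ι} (hu : ∀ x, ¬ IsLocalMax (u i) x) :
    interior ({c | ∀ i j, e i j ≤ u i c} ∩ {c | ∀ i j, u i c ≤ e i j}) = ∅ := by
  obtain ⟨j⟩ := ‹Nonempty κ›
  refine Set.subset_eq_empty (interior_mono ?_) (interior_preimage_singleton_eq_empty hu (e i j))
  rintro c ⟨hup, hlow⟩
  exact (hlow i j).antisymm (hup i j)

end

theorem stmt1
    {d r s : ℕ} (hd : 0 < d) (hr : 0 < r) (hs : 0 < s)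
    {Ω : Type} [Fintype Ω] [Nonempty Ω]
    (Q : Fin s → Ω → ℝ)
    (hQ0 : ∀ j ω, 0 ≤ Q j ω) (hQ1 : ∀ j, ∑ ω : Ω, Q j ω = 1)
    (u : Fin r → (Fin d → ℝ) → ℝ)
    (hcont : ∀ i, Continuous (u i))
    (hconc : ∀ i, ConcaveOn ℝ Set.univ (u i))
    (hmono : ∀ i, Monotone (u i))
    (hstrict : ∀ i (x y : Fin d → ℝ), (∀ k, x k < y k) → u i x < u i y)
    (Z : Ω → Fin d → ℝ) :
    let E : Fin r → Fin s → ℝ := fun i j => ∑ ω : Ω, Q j ω * u i (Z ω)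
    let Cup : Set (Fin d → ℝ) := {c | ∀ i j, E i j ≤ u i c}
    let Clow : Set (Fin d → ℝ) := {c | ∀ i j, u i c ≤ E i j}
    interior (Cup ∩ Clow) = ∅ := by
  have : Nonempty (Fin s) := ⟨⟨0, hs⟩⟩
  exact stmt1_general _ u (not_isLocalMax_of_forall_lt_imp_lt (hstrict ⟨0, hr⟩))
end

section
/- For every random variable Z : Ω → ℝ and each pair (i, j) there is a unique c_{i,j} ∈ ℝ with u^i(c_{i,j}) = E_{Q^j} u^i(Z); moreover C_low(Z) = (−∞, min_{i,j} c_{i,j}] and C_up(Z) = [max_{i,j} c_{i,j}, ∞), so that the strong certainty equivalent bd C_low(Z) equals {min_{i,j} c_{i,j}} and the weak certainty equivalent bd C_up(Z) equals {max_{i,j} c_{i,j}}. -/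
open Pointwise

/-!
An expectation is a convex combination of values of the utility. A continuous utility maps a
connected set containing the outcomes onto a convex set, so the expectation is attained there.
Applied to the whole line this gives a certainty equivalent, and applied to the rays containing all
outcomes it bounds the certainty equivalents uniformly over all utilities and all priors.
-/

open Set

/-- The expected utility `E_q v(Z)` of the random outcome `Z` on a finite state space; the prior is
given by its weights `q`, a point of the standard simplex when `q` is a probability measure. -/
def expectedUtility {Ω X : Type*} [Fintype Ω] (v : X → ℝ) (q : Ω → ℝ) (Z : Ω → X) : ℝ :=
  ∑ ω, q ω * v (Z ω)

/-- The set `C_low(Z)` of sure outcomes which, for every utility `u i` and every prior `Q j`, are at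
most as good as `Z`; its frontier is the strong certainty equivalent. -/
def lowerCertaintySet {ι κ Ω X : Type*} [Fintype Ω] (u : ι → X → ℝ) (Q : κ → Ω → ℝ) (Z : Ω → X) :
    Set X :=
  {c | ∀ i j, u i c ≤ expectedUtility (u i) (Q j) Z}

/-- The set `C_up(Z)` of sure outcomes which, for every utility `u i` and every prior `Q j`, are at
least as good as `Z`; its frontier is the weak certainty equivalent. -/
def upperCertaintySet {ι κ Ω X : Type*} [Fintype Ω] (u : ι → X → ℝ) (Q : κ → Ω → ℝ) (Z : Ω → X) :
    Set X :=
  {c | ∀ i j, expectedUtility (u i) (Q j) Z ≤ u i c}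

section ExpectedUtility

variable {Ω X : Type*} [Fintype Ω] [TopologicalSpace X] {v : X → ℝ} {q : Ω → ℝ} {Z : Ω → X}
  {s : Set X}

theorem expectedUtility_mem_image (hq : q ∈ stdSimplex ℝ Ω) (hs : IsPreconnected s)
    (hv : ContinuousOn v s) (hZ : ∀ ω, Z ω ∈ s) : expectedUtility v q Z ∈ v '' s :=
  (hs.image v hv).convex.sum_mem (fun ω _ ↦ hq.1 ω) hq.2 fun ω _ ↦ mem_image_of_mem v (hZ ω)

theorem existsUnique_eq_expectedUtility [PreconnectedSpace X] (hq : q ∈ stdSimplex ℝ Ω)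
    (hcont : Continuous v) (hinj : Function.Injective v) :
    ∃! c, v c = expectedUtility v q Z := by
  obtain ⟨c, -, hc⟩ :=
    expectedUtility_mem_image hq isPreconnected_univ hcont.continuousOn fun ω ↦ mem_univ (Z ω)
  exact ⟨c, hc, fun _ hy ↦ hinj (hy.trans hc.symm)⟩

theorem mem_of_eq_expectedUtility (hq : q ∈ stdSimplex ℝ Ω) (hs : IsPreconnected s)
    (hcont : ContinuousOn v s) (hinj : Function.Injective v) (hZ : ∀ ω, Z ω ∈ s) {c : X}
    (hc : v c = expectedUtility v q Z) : c ∈ s :=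
  hinj.mem_set_image.1 (hc ▸ expectedUtility_mem_image hq hs hcont hZ)

end ExpectedUtility

section CommonBounds

variable {ι X Y : Type*} [Nonempty ι] [ConditionallyCompleteLinearOrder X] [Preorder Y]
  {u : ι → X → Y} {c : ι → X}

theorem setOf_forall_le_eq_Iic_ciInf (hu : ∀ i, StrictMono (u i)) (hc : BddBelow (range c)) :
    {x | ∀ i, u i x ≤ u i (c i)} = Iic (⨅ i, c i) := by
  ext x
  simp only [mem_ofPred_eq, mem_Iic, (hu _).le_iff_le, le_ciInf_iff hc]

theorem setOf_forall_ge_eq_Ici_ciSup (hu : ∀ i, StrictMono (u i)) (hc : BddAbove (range c)) :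
    {x | ∀ i, u i (c i) ≤ u i x} = Ici (⨆ i, c i) :=
  setOf_forall_le_eq_Iic_ciInf (X := Xᵒᵈ) (Y := Yᵒᵈ) (fun i ↦ (hu i).dual) hc

end CommonBounds

section CertaintyEquivalents

variable {ι κ Ω X : Type*} [Fintype Ω] [ConditionallyCompleteLinearOrder X]
  {u : ι → X → ℝ} {Q : κ → Ω → ℝ} {Z : Ω → X} {c : ι → κ → X}

section Bounds

variable [Nonempty X] [DenselyOrdered X] [TopologicalSpace X] [OrderTopology X]

theorem bddBelow_range_of_eq_expectedUtility (hQ : ∀ j, Q j ∈ stdSimplex ℝ Ω)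
    (hcont : ∀ i, Continuous (u i)) (hinj : ∀ i, Function.Injective (u i))
    (hc : ∀ i j, u i (c i j) = expectedUtility (u i) (Q j) Z) :
    BddBelow (range fun p : ι × κ ↦ c p.1 p.2) := by
  obtain ⟨a, ha⟩ := (finite_range Z).bddBelow
  refine ⟨a, forall_mem_range.2 fun p ↦ ?_⟩
  exact mem_of_eq_expectedUtility (hQ p.2) isPreconnected_Ici (hcont p.1).continuousOn (hinj p.1)
    (forall_mem_range.1 ha) (hc p.1 p.2)

theorem bddAbove_range_of_eq_expectedUtility (hQ : ∀ j, Q j ∈ stdSimplex ℝ Ω)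
    (hcont : ∀ i, Continuous (u i)) (hinj : ∀ i, Function.Injective (u i))
    (hc : ∀ i j, u i (c i j) = expectedUtility (u i) (Q j) Z) :
    BddAbove (range fun p : ι × κ ↦ c p.1 p.2) :=
  bddBelow_range_of_eq_expectedUtility (X := Xᵒᵈ) hQ hcont hinj hc

end Bounds

variable [Nonempty ι] [Nonempty κ]

theorem lowerCertaintySet_eq_Iic (hu : ∀ i, StrictMono (u i))
    (hc : ∀ i j, u i (c i j) = expectedUtility (u i) (Q j) Z)
    (hbdd : BddBelow (range fun p : ι × κ ↦ c p.1 p.2)) :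
    lowerCertaintySet u Q Z = Iic (⨅ i, ⨅ j, c i j) := by
  rw [← ciInf_prod hbdd, ← setOf_forall_le_eq_Iic_ciInf (fun p : ι × κ ↦ hu p.1) hbdd]
  simp only [lowerCertaintySet, hc, Prod.forall]

theorem upperCertaintySet_eq_Ici (hu : ∀ i, StrictMono (u i))
    (hc : ∀ i j, u i (c i j) = expectedUtility (u i) (Q j) Z)
    (hbdd : BddAbove (range fun p : ι × κ ↦ c p.1 p.2)) :
    upperCertaintySet u Q Z = Ici (⨆ i, ⨆ j, c i j) := by
  rw [← ciSup_prod hbdd, ← setOf_forall_ge_eq_Ici_ciSup (fun p : ι × κ ↦ hu p.1) hbdd]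
  simp only [upperCertaintySet, hc, Prod.forall]

end CertaintyEquivalents

theorem stmt4_general {ι κ Ω X : Type*} [Nonempty ι] [Nonempty κ] [Fintype Ω]
    [ConditionallyCompleteLinearOrder X] [DenselyOrdered X] [NoMinOrder X] [NoMaxOrder X]
    [TopologicalSpace X] [OrderTopology X]
    {Q : κ → Ω → ℝ} (hQ : ∀ j, Q j ∈ stdSimplex ℝ Ω)
    {u : ι → X → ℝ} (hcont : ∀ i, Continuous (u i)) (hsm : ∀ i, StrictMono (u i)) (Z : Ω → X) :
    (∀ i j, ∃! c, u i c = expectedUtility (u i) (Q j) Z) ∧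
    ∀ c : ι → κ → X, (∀ i j, u i (c i j) = expectedUtility (u i) (Q j) Z) →
      lowerCertaintySet u Q Z = Iic (⨅ i, ⨅ j, c i j) ∧
      upperCertaintySet u Q Z = Ici (⨆ i, ⨆ j, c i j) ∧
      frontier (lowerCertaintySet u Q Z) = {⨅ i, ⨅ j, c i j} ∧
      frontier (upperCertaintySet u Q Z) = {⨆ i, ⨆ j, c i j} := by
  have hinj i : Function.Injective (u i) := (hsm i).injective
  refine ⟨fun i j ↦ existsUnique_eq_expectedUtility (hQ j) (hcont i) (hinj i), fun c hc ↦ ?_⟩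
  have : Nonempty X := Nonempty.map2 c ‹_› ‹_›
  have hlow : lowerCertaintySet u Q Z = Iic (⨅ i, ⨅ j, c i j) :=
    lowerCertaintySet_eq_Iic hsm hc (bddBelow_range_of_eq_expectedUtility hQ hcont hinj hc)
  have hup : upperCertaintySet u Q Z = Ici (⨆ i, ⨆ j, c i j) :=
    upperCertaintySet_eq_Ici hsm hc (bddAbove_range_of_eq_expectedUtility hQ hcont hinj hc)
  exact ⟨hlow, hup, by rw [hlow, frontier_Iic], by rw [hup, frontier_Ici]⟩

theorem stmt4
    {r s : ℕ} (hr : 0 < r) (hs : 0 < s)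
    {Ω : Type} [Fintype Ω] [Nonempty Ω]
    (Q : Fin s → Ω → ℝ)
    (hQ0 : ∀ j ω, 0 ≤ Q j ω) (hQ1 : ∀ j, ∑ ω : Ω, Q j ω = 1)
    (u : Fin r → ℝ → ℝ)
    (hcont : ∀ i, Continuous (u i))
    (hconc : ∀ i, ConcaveOn ℝ Set.univ (u i))
    (hsm : ∀ i, StrictMono (u i))
    (Z : Ω → ℝ) :
    let E : Fin r → Fin s → ℝ := fun i j => ∑ ω : Ω, Q j ω * u i (Z ω)
    let Cup : Set ℝ := {c | ∀ i j, E i j ≤ u i c}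
    let Clow : Set ℝ := {c | ∀ i j, u i c ≤ E i j}
    (∀ i j, ∃! c : ℝ, u i c = E i j) ∧
    ∀ cc : Fin r → Fin s → ℝ, (∀ i j, u i (cc i j) = E i j) →
      Clow = Set.Iic (⨅ i, ⨅ j, cc i j) ∧
      Cup = Set.Ici (⨆ i, ⨆ j, cc i j) ∧
      frontier Clow = {⨅ i, ⨅ j, cc i j} ∧
      frontier Cup = {⨆ i, ⨆ j, cc i j} := by
  have : Nonempty (Fin r) := Fin.pos_iff_nonempty.1 hr
  have : Nonempty (Fin s) := Fin.pos_iff_nonempty.1 hs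
  exact stmt4_general (fun j ↦ ⟨hQ0 j, hQ1 j⟩) hcont hsm Z
end

section
/- Assume r = 1 and write u = u¹ (multi-prior expected single-utility representation). Then for every random vector Z : Ω → ℝ^d, the weak certainty equivalent satisfies bd C_up(Z) = {c ∈ ℝ^d : u(c) = max_{j=1,…,s} E_{Q^j} u(Z)} and the strong certainty equivalent satisfies bd C_low(Z) = {c ∈ ℝ^d : u(c) = min_{j=1,…,s} E_{Q^j} u(Z)}. -/
open Pointwise

/-!
The set `C_up` is the superlevel set of `u` at the largest expected utility, and `C_low` its
sublevel set at the smallest one. By continuity their frontiers lie in the level sets. Conversely, a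
point of the level set is interior to the superlevel (sublevel) set only if it is a local minimum
(maximum) of `u`, and `u` has none, since lowering (raising) all coordinates slightly strictly
lowers (raises) its value.
-/

open Filter Set Topology

section LevelSets

variable {X β : Type*} [TopologicalSpace X] [LinearOrder β] [TopologicalSpace β]
  [OrderClosedTopology β] {f : X → β} {a : β}

theorem frontier_superlevel_eq_level (hf : Continuous f)
    (hmin : ∀ x, f x = a → ¬IsLocalMin f x) :
    frontier {x | a ≤ f x} = {x | f x = a} := by
  refine Subset.antisymm (fun x hx => (frontier_le_subset_eq continuous_const hf hx).symm) ?_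
  rintro x rfl
  exact ⟨subset_closure le_rfl, fun hx => hmin x rfl (mem_interior_iff_mem_nhds.mp hx)⟩

theorem frontier_sublevel_eq_level (hf : Continuous f)
    (hmax : ∀ x, f x = a → ¬IsLocalMax f x) :
    frontier {x | f x ≤ a} = {x | f x = a} :=
  frontier_superlevel_eq_level (β := βᵒᵈ) hf hmax

end LevelSets

section StrongLT

variable {ι : Type*} {π : ι → Type*} [∀ i, LinearOrder (π i)] [∀ i, TopologicalSpace (π i)]
  [∀ i, OrderTopology (π i)] [∀ i, DenselyOrdered (π i)]

theorem frequently_strongLT_left [∀ i, NoMinOrder (π i)] (x : ∀ i, π i) :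
    ∃ᶠ y in 𝓝 x, StrongLT y x := by
  have hx : x ∈ closure (univ.pi fun i => Iio (x i)) := by
    simp only [closure_pi_set, closure_Iio, mem_univ_pi, mem_Iic, le_refl, implies_true]
  exact (mem_closure_iff_frequently.mp hx).mono fun _ hy i => hy i (mem_univ i)

theorem frequently_strongLT_right [∀ i, NoMaxOrder (π i)] (x : ∀ i, π i) :
    ∃ᶠ y in 𝓝 x, StrongLT x y :=
  frequently_strongLT_left (π := fun i => (π i)ᵒᵈ) x

section Preorder

variable {β : Type*} [Preorder β] {f : (∀ i, π i) → β}

theorem not_isLocalMin_of_strongLT_imp_lt [∀ i, NoMinOrder (π i)]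
    (hf : ∀ ⦃x y⦄, StrongLT x y → f x < f y) (x : ∀ i, π i) : ¬IsLocalMin f x :=
  fun hx => ((frequently_strongLT_left x).and_eventually hx).exists.elim
    fun _ hy => (hf hy.1).not_ge hy.2

theorem not_isLocalMax_of_strongLT_imp_lt [∀ i, NoMaxOrder (π i)]
    (hf : ∀ ⦃x y⦄, StrongLT x y → f x < f y) (x : ∀ i, π i) : ¬IsLocalMax f x :=
  fun hx => ((frequently_strongLT_right x).and_eventually hx).exists.elim
    fun _ hy => (hf hy.1).not_ge hy.2

end Preorder

theorem stmt5_general [∀ i, NoMinOrder (π i)] [∀ i, NoMaxOrder (π i)]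
    {β : Type*} [ConditionallyCompleteLinearOrder β] [TopologicalSpace β] [OrderClosedTopology β]
    {κ : Type*} [Nonempty κ] {E : κ → β} (habove : BddAbove (range E)) (hbelow : BddBelow (range E))
    {u : (∀ i, π i) → β} (hcont : Continuous u)
    (hstrict : ∀ ⦃x y⦄, StrongLT x y → u x < u y) :
    frontier {c | ∀ j, E j ≤ u c} = {c | u c = ⨆ j, E j} ∧
      frontier {c | ∀ j, u c ≤ E j} = {c | u c = ⨅ j, E j} := by
  simp only [← ciSup_le_iff habove, ← le_ciInf_iff hbelow]
  exact ⟨frontier_superlevel_eq_level hcont fun c _ => not_isLocalMin_of_strongLT_imp_lt hstrict c,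
    frontier_sublevel_eq_level hcont fun c _ => not_isLocalMax_of_strongLT_imp_lt hstrict c⟩

end StrongLT

theorem stmt5
    {d s : ℕ} (hd : 0 < d) (hs : 0 < s)
    {Ω : Type} [Fintype Ω] [Nonempty Ω]
    (Q : Fin s → Ω → ℝ)
    (hQ0 : ∀ j ω, 0 ≤ Q j ω) (hQ1 : ∀ j, ∑ ω : Ω, Q j ω = 1)
    (u : (Fin d → ℝ) → ℝ)
    (hcont : Continuous u)
    (hconc : ConcaveOn ℝ Set.univ u)
    (hmono : Monotone u)
    (hstrict : ∀ x y : Fin d → ℝ, (∀ k, x k < y k) → u x < u y)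
    (Z : Ω → Fin d → ℝ) :
    let E : Fin s → ℝ := fun j => ∑ ω : Ω, Q j ω * u (Z ω)
    let Cup : Set (Fin d → ℝ) := {c | ∀ j, E j ≤ u c}
    let Clow : Set (Fin d → ℝ) := {c | ∀ j, u c ≤ E j}
    frontier Cup = {c | u c = ⨆ j, E j} ∧
    frontier Clow = {c | u c = ⨅ j, E j} :=
  have : Nonempty (Fin s) := Fin.pos_iff_nonempty.mp hs
  stmt5_general (finite_range _).bddAbove (finite_range _).bddBelow hcont hstrict
end

section
/- For every claim C : Ω → ℝ^d, the set-valued buy price P^b(C) and the set-valued sell price P^s(C) are closed subsets of ℝ^d. -/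
open Pointwise

/-!
The set-valued map `S` sending an endowment `x` to the utility vectors attainable from `x` has a
convex graph: this is concavity of the utility combined with the convexity of `A`. Hence, for fixed
`v`, the distance from `v` to `S x` is a convex function of `x`. Translation makes the sets `S x`
either all empty or all nonempty; in the nonempty case this function is finite on the whole
finite-dimensional space, hence continuous, and its zero set is `{x | v ∈ closure (S x)}`. The
price sets are preimages of intersections of such closed sets.
-/

open Set Metric

section ConvexGraph

variable {X E : Type*} [SeminormedAddCommGroup E] [NormedSpace ℝ E]

theorem convexOn_infDist_of_convex_graph [AddCommMonoid X] [SMul ℝ X] {S : X → Set E}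
    (hS : Convex ℝ {p : X × E | p.2 ∈ S p.1}) (v : E) :
    ConvexOn ℝ {x | (S x).Nonempty} fun x => infDist v (S x) := by
  have combo_mem {x y : X} {e f : E} (he : e ∈ S x) (hf : f ∈ S y) {a b : ℝ} (ha : 0 ≤ a)
      (hb : 0 ≤ b) (hab : a + b = 1) : a • e + b • f ∈ S (a • x + b • y) :=
    hS (x := (x, e)) he (y := (y, f)) hf ha hb hab
  refine ⟨fun x ⟨e, he⟩ y ⟨f, hf⟩ a b ha hb hab => ⟨_, combo_mem he hf ha hb hab⟩,
    fun x hx y hy a b ha hb hab => le_of_forall_pos_le_add fun ε hε => ?_⟩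
  obtain ⟨e, he, hev⟩ := (infDist_lt_iff hx).1 (lt_add_of_pos_right (infDist v (S x)) hε)
  obtain ⟨f, hf, hfv⟩ := (infDist_lt_iff hy).1 (lt_add_of_pos_right (infDist v (S y)) hε)
  rw [dist_comm] at hev hfv
  calc infDist v (S (a • x + b • y))
      ≤ dist v (a • e + b • f) := infDist_le_dist_of_mem (combo_mem he hf ha hb hab)
    _ = dist (a • e + b • f) v := dist_comm _ _
    _ ≤ a • dist e v + b • dist f v :=
      (convexOn_univ_dist v).2 (mem_univ e) (mem_univ f) ha hb hab
    _ ≤ a • (infDist v (S x) + ε) + b • (infDist v (S y) + ε) := by gcongr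
    _ = a • infDist v (S x) + b • infDist v (S y) + ε := by
      simp only [smul_eq_mul]
      linear_combination ε * hab

theorem isClosed_setOf_mem_closure_of_convex_graph [NormedAddCommGroup X] [NormedSpace ℝ X]
    [FiniteDimensional ℝ X] {S : X → Set E} (hS : Convex ℝ {p : X × E | p.2 ∈ S p.1})
    (hne : ∀ x y, (S x).Nonempty → (S y).Nonempty) (v : E) :
    IsClosed {x | v ∈ closure (S x)} := by
  obtain hempty | ⟨x, hx⟩ := {x | v ∈ closure (S x)}.eq_empty_or_nonempty
  · exact hempty ▸ isClosed_empty
  have hne' (y : X) : (S y).Nonempty := hne x y (closure_nonempty_iff.1 ⟨v, hx⟩)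
  have hconvex : ConvexOn ℝ univ fun x => infDist v (S x) := by
    simpa only [hne', ofPred_true] using convexOn_infDist_of_convex_graph hS v
  simp only [mem_closure_iff_infDist_zero (hne' _)]
  exact isClosed_eq hconvex.locallyLipschitz.continuous continuous_const

end ConvexGraph

theorem convex_graph_of_smul_add_smul_subset {X F : Type*} [AddCommMonoid X] [SMul ℝ X]
    [AddCommMonoid F] [SMul ℝ F] {A : X → Set F}
    (hA : ∀ (x y : X) (a : ℝ), 0 ≤ a → a ≤ 1 →
      a • A x + (1 - a) • A y ⊆ A (a • x + (1 - a) • y)) :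
    Convex ℝ {p : X × F | p.2 ∈ A p.1} := by
  rintro ⟨x, W⟩ hW ⟨y, Z⟩ hZ a b ha hb hab
  obtain rfl : b = 1 - a := eq_sub_of_add_eq' hab
  exact hA x y a ha (sub_nonneg.1 hb) (add_mem_add (smul_mem_smul_set hW) (smul_mem_smul_set hZ))

section ExpectedUtility

variable {Ω X : Type*} [Fintype Ω] [AddCommMonoid X] [SMul ℝ X]

theorem concaveOn_sum_mul_comp_eval {q : Ω → ℝ} (hq : ∀ ω, 0 ≤ q ω) {u : X → ℝ}
    (hu : ConcaveOn ℝ univ u) : ConcaveOn ℝ univ fun W : Ω → X => ∑ ω, q ω * u (W ω) := by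
  refine ⟨convex_univ, fun W _ Z _ a b ha hb hab => ?_⟩
  simp only [smul_eq_mul, Finset.mul_sum, ← Finset.sum_add_distrib]
  refine Finset.sum_le_sum fun ω _ => ?_
  calc a * (q ω * u (W ω)) + b * (q ω * u (Z ω))
      = q ω * (a • u (W ω) + b • u (Z ω)) := by simp only [smul_eq_mul]; ring
    _ ≤ q ω * u (a • W ω + b • Z ω) :=
      mul_le_mul_of_nonneg_left (hu.2 (mem_univ _) (mem_univ _) ha hb hab) (hq ω)

theorem concaveOn_expectedUtility {ι κ : Type*} {Q : κ → Ω → ℝ} (hQ : ∀ j ω, 0 ≤ Q j ω)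
    {u : ι → X → ℝ} (hu : ∀ i, ConcaveOn ℝ univ (u i)) :
    ConcaveOn ℝ univ fun (W : Ω → X) (ij : ι × κ) => ∑ ω, Q ij.2 ω * u ij.1 (W ω) :=
  ⟨convex_univ, fun _ hW _ hZ _ _ ha hb hab ij =>
    (concaveOn_sum_mul_comp_eval (hQ ij.2) (hu ij.1)).2 hW hZ ha hb hab⟩

end ExpectedUtility

section ValueSet

variable {X F E : Type*}

/-- The utility vectors dominated by the utility `U (W + C)` of some position `W ∈ A x`
supplemented by the claim `C`, that is, `⋃ W ∈ A x, (U (W + C) - E₊)` with the subtraction of the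
positive cone `E₊` expressed by the order. -/
def attainableSet [Add F] [LE E] (U : F → E) (A : X → Set F) (C : F) (x : X) : Set E :=
  {v | ∃ W ∈ A x, v ≤ U (W + C)}

/-- The value set `V(x, C)` of the endowment `x` and the claim `C`. -/
def valueSet [Add F] [LE E] [TopologicalSpace E] (U : F → E) (A : X → Set F) (x : X) (C : F) :
    Set E :=
  closure (attainableSet U A C x)

theorem attainableSet_nonempty_iff [Add F] [Preorder E] {U : F → E} {A : X → Set F} {C : F}
    {x : X} : (attainableSet U A C x).Nonempty ↔ (A x).Nonempty :=
  ⟨fun ⟨_, W, hW, _⟩ => ⟨W, hW⟩, fun ⟨W, hW⟩ => ⟨U (W + C), W, hW, le_rfl⟩⟩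

variable [AddCommMonoid F] [Module ℝ F] {A : X → Set F}

theorem convex_graph_attainableSet [AddCommMonoid X] [SMul ℝ X] [AddCommMonoid E] [PartialOrder E]
    [IsOrderedAddMonoid E] [Module ℝ E] [PosSMulMono ℝ E] {U : F → E} (hU : ConcaveOn ℝ univ U)
    (hA : Convex ℝ {p : X × F | p.2 ∈ A p.1}) (C : F) :
    Convex ℝ {p : X × E | p.2 ∈ attainableSet U A C p.1} := by
  rintro ⟨x, v⟩ ⟨W, hW, hv⟩ ⟨y, w⟩ ⟨Z, hZ, hw⟩ a b ha hb hab
  have hUC : ConcaveOn ℝ univ fun W => U (W + C) := hU.translate_left C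
  refine ⟨a • W + b • Z, hA (x := (x, W)) hW (y := (y, Z)) hZ ha hb hab, ?_⟩
  calc a • v + b • w ≤ a • U (W + C) + b • U (Z + C) := by gcongr
    _ ≤ U (a • W + b • Z + C) := hUC.2 (mem_univ W) (mem_univ Z) ha hb hab

theorem isClosed_setOf_subset_valueSet [NormedAddCommGroup X] [NormedSpace ℝ X]
    [FiniteDimensional ℝ X] [SeminormedAddCommGroup E] [NormedSpace ℝ E] [PartialOrder E]
    [IsOrderedAddMonoid E] [PosSMulMono ℝ E] {U : F → E} (hU : ConcaveOn ℝ univ U)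
    (hA : Convex ℝ {p : X × F | p.2 ∈ A p.1})
    (hne : ∀ x y, (A x).Nonempty → (A y).Nonempty) (T : Set E) (C : F) :
    IsClosed {x | T ⊆ valueSet U A x C} := by
  have hmem (v : E) : IsClosed {x | v ∈ valueSet U A x C} :=
    isClosed_setOf_mem_closure_of_convex_graph (convex_graph_attainableSet hU hA C)
      (by simpa only [attainableSet_nonempty_iff] using hne) v
  simpa only [subset_def, ofPred_forall] using isClosed_biInter fun v (_ : v ∈ T) => hmem v

end ValueSet

section Prices

variable {Ω X E : Type*} [AddCommGroup X] [LE E] [TopologicalSpace E]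

/-- The set-valued buy price `P^b(C)` at the initial endowment `x₀`. -/
def buyPrice (U : (Ω → X) → E) (A : X → Set (Ω → X)) (x₀ : X) (C : Ω → X) : Set X :=
  {p | valueSet U A x₀ 0 ⊆ valueSet U A (x₀ - p) C}

/-- The set-valued sell price `P^s(C)` at the initial endowment `x₀`. -/
def sellPrice (U : (Ω → X) → E) (A : X → Set (Ω → X)) (x₀ : X) (C : Ω → X) : Set X :=
  {p | valueSet U A x₀ 0 ⊆ valueSet U A (x₀ + p) (-C)}

end Prices

theorem nonempty_of_forall_add_const_mem {Ω X : Type*} [AddCommGroup X] {A : X → Set (Ω → X)}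
    (hAtr : ∀ (x : X) (W : Ω → X), W ∈ A x → ∀ c : X, (fun ω => W ω + c) ∈ A (x + c)) (x y : X) :
    (A x).Nonempty → (A y).Nonempty := by
  rintro ⟨W, hW⟩
  exact ⟨_, add_sub_cancel x y ▸ hAtr x W hW (y - x)⟩

theorem stmt12_general {Ω X E : Type*} [NormedAddCommGroup X] [NormedSpace ℝ X]
    [FiniteDimensional ℝ X] [SeminormedAddCommGroup E] [NormedSpace ℝ E] [PartialOrder E]
    [IsOrderedAddMonoid E] [PosSMulMono ℝ E] {U : (Ω → X) → E} (hU : ConcaveOn ℝ univ U)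
    {A : X → Set (Ω → X)} (hA : Convex ℝ {p : X × (Ω → X) | p.2 ∈ A p.1})
    (hAtr : ∀ (x : X) (W : Ω → X), W ∈ A x → ∀ c : X, (fun ω => W ω + c) ∈ A (x + c))
    (x₀ : X) (C : Ω → X) :
    IsClosed (buyPrice U A x₀ C) ∧ IsClosed (sellPrice U A x₀ C) := by
  have hclosed (C : Ω → X) : IsClosed {x | valueSet U A x₀ 0 ⊆ valueSet U A x C} :=
    isClosed_setOf_subset_valueSet hU hA (nonempty_of_forall_add_const_mem hAtr) _ C
  exact ⟨(hclosed C).preimage (continuous_const.sub continuous_id),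
    (hclosed (-C)).preimage (continuous_const.add continuous_id)⟩

theorem stmt12
    {d r s : ℕ} (hd : 0 < d) (hr : 0 < r) (hs : 0 < s)
    {Ω : Type} [Fintype Ω] [Nonempty Ω]
    (Q : Fin s → Ω → ℝ)
    (hQ0 : ∀ j ω, 0 ≤ Q j ω) (hQ1 : ∀ j, ∑ ω : Ω, Q j ω = 1)
    (u : Fin r → (Fin d → ℝ) → ℝ)
    (hcont : ∀ i, Continuous (u i))
    (hconc : ∀ i, ConcaveOn ℝ Set.univ (u i))
    (hmono : ∀ i, Monotone (u i))
    (hstrict : ∀ i (x y : Fin d → ℝ), (∀ k, x k < y k) → u i x < u i y)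
    (A : (Fin d → ℝ) → Set (Ω → Fin d → ℝ))
    (hAconv : ∀ x, Convex ℝ (A x))
    (hAcomb : ∀ (x y : Fin d → ℝ) (a : ℝ), 0 ≤ a → a ≤ 1 →
      a • A x + (1 - a) • A y ⊆ A (a • x + (1 - a) • y))
    (hAmono : ∀ x y : Fin d → ℝ, x ≤ y → A x ⊆ A y)
    (hAtr : ∀ (x : Fin d → ℝ) (W : Ω → Fin d → ℝ), W ∈ A x →
      ∀ c : Fin d → ℝ, (fun ω => W ω + c) ∈ A (x + c))
    (hAcont : ∀ (x : Fin d → ℝ) (xk : ℕ → Fin d → ℝ), Antitone xk →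
      Filter.Tendsto xk Filter.atTop (nhds x) → A x = ⋂ n, A (xk n))
    (x0 : Fin d → ℝ) :
    let U : (Ω → Fin d → ℝ) → (Fin r × Fin s → ℝ) :=
      fun W ij => ∑ ω : Ω, Q ij.2 ω * u ij.1 (W ω)
    let V : (Fin d → ℝ) → (Ω → Fin d → ℝ) → Set (Fin r × Fin s → ℝ) :=
      fun x C => closure {v | ∃ W ∈ A x, v ≤ U (W + C)}
    let Pb : (Ω → Fin d → ℝ) → Set (Fin d → ℝ) :=
      fun C => {p | V x0 0 ⊆ V (x0 - p) C}
    let Ps : (Ω → Fin d → ℝ) → Set (Fin d → ℝ) :=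
      fun C => {p | V x0 0 ⊆ V (x0 + p) (-C)}
    ∀ C : Ω → Fin d → ℝ, IsClosed (Pb C) ∧ IsClosed (Ps C) := by
  exact stmt12_general (concaveOn_expectedUtility hQ0 hconc)
    (convex_graph_of_smul_add_smul_subset hAcomb) hAtr x0
end
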